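/- arXiv:1612.08698 — 2 statements merged into one kernel-verified Lean document; each statement's English description precedes it below -/
import Mathlib

section
/- For every integer d ≥ 0, there exists a real number ε > 0 such that for every finite d-degenerate graph G and every list assignment L for G in which every list has size d+2, the graph G with the list assignment L is weighted ε-flexible. -/
def IsLColoring {V : Type*} (G : SimpleGraph V) (L : V → Finset ℕ) (φ : V → ℕ) : Prop :=
  (∀ v, φ v ∈ L v) ∧ ∀ ⦃u w : V⦄, G.Adj u w → φ u ≠ φ w

def WeightTotal {V : Type*} [Fintype V] (L : V → Finset ℕ) (w : V → ℕ → ℝ) : ℝ :=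
  ∑ v, ∑ c ∈ L v, w v c

def WEpsSat {V : Type*} [Fintype V] (G : SimpleGraph V) (L : V → Finset ℕ)
    (w : V → ℕ → ℝ) (ε : ℝ) : Prop :=
  ∃ φ : V → ℕ, IsLColoring G L φ ∧ ε * WeightTotal L w ≤ ∑ v, w v (φ v)

def WFlexible {V : Type*} [Fintype V] (G : SimpleGraph V) (L : V → Finset ℕ) (ε : ℝ) : Prop :=
  ∀ w : V → ℕ → ℝ, (∀ v c, 0 ≤ w v c) → WEpsSat G L w ε

/-- `G` is `d`-degenerate: every subgraph of `G` (with at least one vertex)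
has a vertex of degree at most `d`. -/
def Degenerate {V : Type*} (G : SimpleGraph V) (d : ℕ) : Prop :=
  ∀ H : G.Subgraph, H.verts.Nonempty → ∃ v ∈ H.verts, (H.neighborSet v).ncard ≤ d

/-!
Color the vertices of a `d`-degenerate graph greedily along a degeneracy order, choosing each color
uniformly at random among the colors of the list not yet used on the at most `d` earlier neighbors.
At least two colors are available at every step, so a vertex avoids any prescribed color with
conditional probability at least `1/2`, and a set `S` of vertices avoids prescribed colors with
probability at least `2 ^ (-#S)`. Applied to the earlier neighbors of `v`, this says that a color
`c ∈ L v` is available at `v` with probability at least `2 ^ (-d)`; it is then chosen with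
conditional probability at least `1 / #(L v)`. Hence every request `(v, c)` is met with probability
at least `2 ^ (-d) / #(L v)`, and some coloring satisfies at least the expected weight.
-/

open scoped ENNReal NNReal Finset

section Probability

variable {α β : Type*}

theorem toOuterMeasure_mul_le_toOuterMeasure_bind (p : PMF α) (f : α → PMF β) {s : Set α}
    {t : Set β} {r : ℝ≥0∞} (h : ∀ a ∈ s, r ≤ (f a).toOuterMeasure t) :
    p.toOuterMeasure s * r ≤ (p.bind f).toOuterMeasure t := by
  rw [PMF.toOuterMeasure_bind_apply, PMF.toOuterMeasure_apply, ← ENNReal.tsum_mul_right]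
  refine ENNReal.tsum_le_tsum fun a => ?_
  by_cases ha : a ∈ s
  · rw [Set.indicator_of_mem ha]
    gcongr
    exact h a ha
  · simp [Set.indicator_of_notMem ha]

theorem exists_mem_support_le_of_le_tsum (p : PMF α) {f : α → ℝ≥0∞} {r : ℝ≥0∞} (hr : r ≠ ∞)
    (h : r ≤ ∑' a, p a * f a) : ∃ a ∈ p.support, r ≤ f a := by
  by_contra! hlt
  have hle : ∀ a, p a * f a ≤ p a * r := fun a => by
    by_cases ha : a ∈ p.support
    · gcongr
      exact (hlt a ha).le
    · simp [(p.apply_eq_zero_iff a).2 ha]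
  have hmean : ∑' a, p a * r = r := by rw [ENNReal.tsum_mul_right, p.tsum_coe, one_mul]
  have hfin : ∑' a, p a * f a ≠ ∞ :=
    ne_top_of_le_ne_top hr ((ENNReal.tsum_le_tsum hle).trans_eq hmean)
  obtain ⟨a, ha⟩ := p.support_nonempty
  have hlt_mean : ∑' a, p a * f a < ∑' a, p a * r :=
    ENNReal.tsum_lt_tsum hfin hle <|
      ENNReal.mul_lt_mul_right ((p.mem_support_iff a).1 ha) (p.apply_ne_top a) (hlt a ha)
  exact (hlt_mean.trans_eq hmean).not_ge h

theorem sum_mul_toOuterMeasure_fiber_le_tsum (p : PMF α) (X : α → β) (s : Finset β)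
    (w : β → ℝ≥0∞) :
    ∑ b ∈ s, w b * p.toOuterMeasure {a | X a = b} ≤ ∑' a, p a * w (X a) := by
  classical
  simp only [PMF.toOuterMeasure_apply, ← ENNReal.tsum_mul_left]
  rw [← Summable.tsum_finsetSum fun _ _ => ENNReal.summable]
  refine ENNReal.tsum_le_tsum fun a => ?_
  calc ∑ b ∈ s, w b * {a | X a = b}.indicator p a
      = if X a ∈ s then w (X a) * p a else 0 := by
        simp [Set.indicator_apply]
    _ ≤ p a * w (X a) := by
        rw [mul_comm]
        split_ifs <;> simp

theorem two_inv_le_toOuterMeasure_uniformOfFinset_ne {s : Finset α} (hs : s.Nonempty)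
    (hcard : 2 ≤ #s) (c : α) :
    2⁻¹ ≤ (PMF.uniformOfFinset s hs).toOuterMeasure {x | x ≠ c} := by
  classical
  have herase : #s ≤ 2 * #{x ∈ s | x ≠ c} := by
    have := s.pred_card_le_card_erase (a := c)
    rw [Finset.filter_ne']
    omega
  rw [PMF.toOuterMeasure_uniformOfFinset_apply, ENNReal.le_div_iff_mul_le (by simp [hs.ne_empty])
    (by simp), mul_comm, ← div_eq_mul_inv]
  refine ENNReal.div_le_of_le_mul' ?_
  exact_mod_cast herase

end Probability

section Flexibility

variable {V : Type*} [Fintype V] {G : SimpleGraph V} {L : V → Finset ℕ}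

theorem wFlexible_of_le_toOuterMeasure (p : PMF (V → ℕ)) {ε : ℝ}
    (hp : ∀ φ ∈ p.support, IsLColoring G L φ)
    (hε : ∀ v, ∀ c ∈ L v, ENNReal.ofReal ε ≤ p.toOuterMeasure {φ | φ v = c}) :
    WFlexible G L ε := by
  intro w hw
  lift w to V → ℕ → ℝ≥0 using hw
  have hmean : ENNReal.ofReal ε * ∑ v, ∑ c ∈ L v, (w v c : ℝ≥0∞) ≤
      ∑' φ, p φ * ∑ v, (w v (φ v) : ℝ≥0∞) :=
    calc ENNReal.ofReal ε * ∑ v, ∑ c ∈ L v, (w v c : ℝ≥0∞)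
        ≤ ∑ v, ∑ c ∈ L v, w v c * p.toOuterMeasure {φ | φ v = c} := by
          simp only [Finset.mul_sum]
          refine Finset.sum_le_sum fun v _ => Finset.sum_le_sum fun c hc => ?_
          rw [mul_comm]
          gcongr
          exact hε v c hc
      _ ≤ ∑ v, ∑' φ, p φ * (w v (φ v) : ℝ≥0∞) := by
          gcongr with v
          exact sum_mul_toOuterMeasure_fiber_le_tsum p (fun φ => φ v) (L v) fun c => w v c
      _ = ∑' φ, p φ * ∑ v, (w v (φ v) : ℝ≥0∞) := by
          simp only [Finset.mul_sum]
          exact (Summable.tsum_finsetSum fun _ _ => ENNReal.summable).symm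
  obtain ⟨φ, hφ, hle⟩ := exists_mem_support_le_of_le_tsum p
    (ENNReal.mul_ne_top ENNReal.ofReal_ne_top (by simp)) hmean
  have hle' : ε.toNNReal * ∑ v, ∑ c ∈ L v, w v c ≤ ∑ v, w v (φ v) := by
    rw [ENNReal.ofReal] at hle
    exact_mod_cast hle
  refine ⟨φ, hp φ hφ, ?_⟩
  calc ε * WeightTotal L (fun v c => (w v c : ℝ))
      ≤ ε.toNNReal * WeightTotal L (fun v c => (w v c : ℝ)) := by
        gcongr
        · exact Finset.sum_nonneg fun v _ => Finset.sum_nonneg fun c _ => (w v c).coe_nonneg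
        · exact Real.le_coe_toNNReal ε
    _ ≤ ∑ v, (w v (φ v) : ℝ) := by
        rw [WeightTotal]
        exact_mod_cast hle'

end Flexibility

section GreedyColoring

variable {V : Type*} {G : SimpleGraph V} {L : V → Finset ℕ}

theorem Degenerate.finset_induction [DecidableEq V] [DecidableRel G.Adj] {d : ℕ}
    (hG : Degenerate G d) {P : Finset V → Prop} (empty : P ∅)
    (insert : ∀ A v, v ∉ A → #{u ∈ A | G.Adj v u} ≤ d → P A → P (insert v A)) (A : Finset V) :
    P A := by
  induction A using Finset.strongInduction with
  | H A ih =>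
    obtain rfl | hA := A.eq_empty_or_nonempty
    · exact empty
    obtain ⟨v, hv, hdeg⟩ := hG ((⊤ : G.Subgraph).induce A) (by simpa using hA)
    replace hv : v ∈ A := by simpa using hv
    have hnbrs : ((⊤ : G.Subgraph).induce A).neighborSet v =
        ({u ∈ A.erase v | G.Adj v u} : Finset V) := by
      ext u
      have : G.Adj v u → u ≠ v := fun h => h.ne'
      simp only [SimpleGraph.Subgraph.mem_neighborSet, SimpleGraph.Subgraph.induce_adj,
        SimpleGraph.Subgraph.top_adj, Finset.mem_coe, Finset.mem_filter, Finset.mem_erase]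
      tauto
    rw [hnbrs, Set.ncard_coe_finset] at hdeg
    rw [← Finset.insert_erase hv]
    exact insert _ v (A.notMem_erase v) hdeg (ih _ (Finset.erase_ssubset hv))

/-- `φ` restricts to an `L`-coloring of the subgraph of `G` induced by `A`; the partial colorings
built by the greedy procedure are encoded as total functions with arbitrary values outside `A`. -/
def IsLColoringOn (G : SimpleGraph V) (L : V → Finset ℕ) (A : Finset V) (φ : V → ℕ) : Prop :=
  (∀ v ∈ A, φ v ∈ L v) ∧ ∀ u ∈ A, ∀ v ∈ A, G.Adj u v → φ u ≠ φ v

/-- The colors of `L v` that `φ` does not use on the neighbors of `v` in `A`: those with which a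
coloring of `A` can be extended to `v`. -/
def freeColors (G : SimpleGraph V) [DecidableRel G.Adj] (L : V → Finset ℕ) (A : Finset V) (v : V)
    (φ : V → ℕ) : Finset ℕ :=
  L v \ Finset.image φ {u ∈ A | G.Adj v u}

variable [DecidableRel G.Adj] {A : Finset V} {v : V}

theorem mem_freeColors {φ : V → ℕ} {c : ℕ} :
    c ∈ freeColors G L A v φ ↔ c ∈ L v ∧ ∀ u ∈ A, G.Adj v u → φ u ≠ c := by
  simp [freeColors]

theorem card_le_card_freeColors_add (φ : V → ℕ) :
    #(L v) ≤ #(freeColors G L A v φ) + #{u ∈ A | G.Adj v u} :=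
  calc #(L v) ≤ #(freeColors G L A v φ) + #(Finset.image φ {u ∈ A | G.Adj v u}) :=
        Nat.sub_le_iff_le_add.1 (Finset.le_card_sdiff _ _)
    _ ≤ #(freeColors G L A v φ) + #{u ∈ A | G.Adj v u} :=
        Nat.add_le_add_left Finset.card_image_le _

variable [DecidableEq V]

theorem IsLColoringOn.update {φ : V → ℕ} (hφ : IsLColoringOn G L A φ) (hv : v ∉ A) {c : ℕ}
    (hc : c ∈ freeColors G L A v φ) : IsLColoringOn G L (insert v A) (Function.update φ v c) := by
  obtain ⟨hcL, hcA⟩ := mem_freeColors.1 hc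
  have hne : ∀ u ∈ A, u ≠ v := fun u hu => ne_of_mem_of_not_mem hu hv
  have hupd : ∀ u ∈ A, Function.update φ v c u = φ u := fun u hu =>
    Function.update_of_ne (hne u hu) _ _
  simp only [IsLColoringOn, Finset.forall_mem_insert, Function.update_self]
  refine ⟨⟨hcL, fun u hu => ?_⟩, ⟨fun h => (G.loopless.irrefl v h).elim, fun u hu h => ?_⟩,
    fun u hu => ⟨fun h => ?_, fun u' hu' h => ?_⟩⟩
  · rw [hupd u hu]
    exact hφ.1 u hu
  · rw [hupd u hu]
    exact (hcA u hu h).symm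
  · rw [hupd u hu]
    exact hcA u hu h.symm
  · rw [hupd u hu, hupd u' hu']
    exact hφ.2 u hu u' hu' h

/-- The random coloring obtained from `φ` by giving `v` a uniformly random free color: one step of
the random greedy procedure. -/
noncomputable def randomUpdate (h : ∀ φ, (freeColors G L A v φ).Nonempty) (φ : V → ℕ) :
    PMF (V → ℕ) :=
  (PMF.uniformOfFinset (freeColors G L A v φ) (h φ)).map (Function.update φ v)

variable (h : ∀ φ, (freeColors G L A v φ).Nonempty) (p : PMF (V → ℕ))

theorem toOuterMeasure_randomUpdate (φ : V → ℕ) (E : Set (V → ℕ)) :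
    (randomUpdate h φ).toOuterMeasure E =
      (PMF.uniformOfFinset _ (h φ)).toOuterMeasure {c | Function.update φ v c ∈ E} :=
  PMF.toOuterMeasure_map_apply _ _ _

theorem toOuterMeasure_le_bind_randomUpdate {E : Set (V → ℕ)}
    (hE : ∀ φ ∈ E, ∀ c, Function.update φ v c ∈ E) :
    p.toOuterMeasure E ≤ (p.bind (randomUpdate h)).toOuterMeasure E := by
  rw [← mul_one (p.toOuterMeasure E)]
  refine toOuterMeasure_mul_le_toOuterMeasure_bind p _ fun φ hφ => ?_
  rw [toOuterMeasure_randomUpdate]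
  exact ((PMF.toOuterMeasure_apply_eq_one_iff _ _).2 fun c _ => hE φ hφ c).ge

theorem two_inv_pow_le_bind_randomUpdate_avoid (hfree : ∀ φ, 2 ≤ #(freeColors G L A v φ))
    {S : Finset V} {f : V → ℕ}
    (hp : 2⁻¹ ^ #(S.erase v) ≤ p.toOuterMeasure {φ | ∀ u ∈ S.erase v, φ u ≠ f u}) :
    2⁻¹ ^ #S ≤ (p.bind (randomUpdate h)).toOuterMeasure {φ | ∀ u ∈ S, φ u ≠ f u} := by
  by_cases hv : v ∈ S
  · calc (2⁻¹ : ℝ≥0∞) ^ #S = 2⁻¹ ^ #(S.erase v) * 2⁻¹ := by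
          rw [← pow_succ, Finset.card_erase_add_one hv]
      _ ≤ p.toOuterMeasure {φ | ∀ u ∈ S.erase v, φ u ≠ f u} * 2⁻¹ := by gcongr
      _ ≤ (p.bind (randomUpdate h)).toOuterMeasure {φ | ∀ u ∈ S, φ u ≠ f u} := by
          refine toOuterMeasure_mul_le_toOuterMeasure_bind p _ fun φ hφ => ?_
          rw [toOuterMeasure_randomUpdate]
          refine (two_inv_le_toOuterMeasure_uniformOfFinset_ne (h φ) (hfree φ) (f v)).trans
            (MeasureTheory.measure_mono fun c hc u hu => ?_)
          obtain rfl | huv := eq_or_ne u v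
          · rwa [Function.update_self]
          · rw [Function.update_of_ne huv]
            exact hφ u (Finset.mem_erase.2 ⟨huv, hu⟩)
  · rw [Finset.erase_eq_of_notMem hv] at hp
    refine hp.trans (toOuterMeasure_le_bind_randomUpdate h p fun φ hφ c u hu => ?_)
    rw [Function.update_of_ne (ne_of_mem_of_not_mem hu hv)]
    exact hφ u hu

theorem toOuterMeasure_div_card_le_bind_randomUpdate_eq {c : ℕ} (hc : c ∈ L v) :
    p.toOuterMeasure {φ | ∀ u ∈ ({u ∈ A | G.Adj v u} : Finset V), φ u ≠ c} / #(L v) ≤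
      (p.bind (randomUpdate h)).toOuterMeasure {φ | φ v = c} := by
  rw [div_eq_mul_inv]
  refine toOuterMeasure_mul_le_toOuterMeasure_bind p _ fun φ hφ => ?_
  have hfree : c ∈ freeColors G L A v φ :=
    mem_freeColors.2 ⟨hc, fun u hu hadj => hφ u (Finset.mem_filter.2 ⟨hu, hadj⟩)⟩
  calc (#(L v) : ℝ≥0∞)⁻¹ ≤ (#(freeColors G L A v φ) : ℝ≥0∞)⁻¹ := by
        gcongr
        exact Finset.sdiff_subset
    _ = (PMF.uniformOfFinset _ (h φ)).toOuterMeasure {c} := by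
        rw [PMF.toOuterMeasure_apply_singleton, PMF.uniformOfFinset_apply_of_mem (h φ) hfree]
    _ = (randomUpdate h φ).toOuterMeasure {φ | φ v = c} := by
        rw [toOuterMeasure_randomUpdate]
        simp only [Set.mem_ofPred_eq, Function.update_self, Set.ofPred_eq_eq_singleton]

end GreedyColoring

section Distribution

variable {V : Type*} {G : SimpleGraph V} {L : V → Finset ℕ} {d : ℕ}

/-- The invariant of the random greedy procedure: `p` is a distribution on `L`-colorings of `A`
under which prescribed colors are avoided on a set `S` with probability at least `2 ^ (-#S)`, and
each color of `L v` is used at `v` with probability at least `2 ^ (-d) / #(L v)`. -/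
structure IsFlexibleLawOn (G : SimpleGraph V) (L : V → Finset ℕ) (d : ℕ) (A : Finset V)
    (p : PMF (V → ℕ)) : Prop where
  isLColoringOn : ∀ φ ∈ p.support, IsLColoringOn G L A φ
  avoid : ∀ S ⊆ A, ∀ f : V → ℕ, 2⁻¹ ^ #S ≤ p.toOuterMeasure {φ | ∀ u ∈ S, φ u ≠ f u}
  hit : ∀ v ∈ A, ∀ c ∈ L v, 2⁻¹ ^ d / #(L v) ≤ p.toOuterMeasure {φ | φ v = c}

theorem isFlexibleLawOn_empty (p : PMF (V → ℕ)) : IsFlexibleLawOn G L d ∅ p where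
  isLColoringOn := by simp [IsLColoringOn]
  avoid S hS f := by
    obtain rfl := Finset.subset_empty.1 hS
    simpa using ((PMF.toOuterMeasure_apply_eq_one_iff p _).2 (Set.subset_univ _)).ge
  hit := by simp

theorem IsFlexibleLawOn.bind_randomUpdate [DecidableEq V] [DecidableRel G.Adj] {A : Finset V}
    {v : V} {p : PMF (V → ℕ)} (hp : IsFlexibleLawOn G L d A p) (hv : v ∉ A)
    (hdeg : #{u ∈ A | G.Adj v u} ≤ d) (hfree : ∀ φ, 2 ≤ #(freeColors G L A v φ))
    (h : ∀ φ, (freeColors G L A v φ).Nonempty) :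
    IsFlexibleLawOn G L d (insert v A) (p.bind (randomUpdate h)) where
  isLColoringOn ψ hψ := by
    obtain ⟨φ, hφ, hψφ⟩ := (PMF.mem_support_bind_iff _ _ _).1 hψ
    obtain ⟨c, hc, rfl⟩ := (PMF.mem_support_map_iff _ _ _).1 hψφ
    exact (hp.isLColoringOn φ hφ).update hv ((PMF.mem_support_uniformOfFinset_iff _ _).1 hc)
  avoid S hS f := two_inv_pow_le_bind_randomUpdate_avoid h p hfree
    (hp.avoid _ (Finset.subset_insert_iff.1 hS) f)
  hit u hu c hc := by
    obtain rfl | huA := Finset.mem_insert.1 hu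
    · calc (2⁻¹ : ℝ≥0∞) ^ d / #(L u) ≤ 2⁻¹ ^ #{w ∈ A | G.Adj u w} / #(L u) := by
            gcongr 1
            exact pow_le_pow_right_of_le_one' (by simp) hdeg
        _ ≤ p.toOuterMeasure {φ | ∀ w ∈ ({w ∈ A | G.Adj u w} : Finset V), φ w ≠ c} / #(L u) := by
            gcongr
            exact hp.avoid _ (Finset.filter_subset _ _) fun _ => c
        _ ≤ (p.bind (randomUpdate h)).toOuterMeasure {φ | φ u = c} :=
            toOuterMeasure_div_card_le_bind_randomUpdate_eq h p hc
    · have huv : u ≠ v := ne_of_mem_of_not_mem huA hv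
      refine (hp.hit u huA c hc).trans (toOuterMeasure_le_bind_randomUpdate h p fun φ hφ x => ?_)
      rwa [Set.mem_ofPred_eq, Function.update_of_ne huv]

theorem Degenerate.exists_isFlexibleLawOn (hG : Degenerate G d) (hL : ∀ v, d + 2 ≤ #(L v))
    (A : Finset V) : ∃ p, IsFlexibleLawOn G L d A p := by
  classical
  induction A using hG.finset_induction with
  | empty => exact ⟨PMF.pure 0, isFlexibleLawOn_empty _⟩
  | insert A v hv hdeg ih =>
    obtain ⟨p, hp⟩ := ih
    have hfree : ∀ φ, 2 ≤ #(freeColors G L A v φ) := fun φ => by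
      have := card_le_card_freeColors_add (G := G) (L := L) (A := A) (v := v) φ
      have := hL v
      omega
    have hne : ∀ φ, (freeColors G L A v φ).Nonempty := fun φ =>
      Finset.card_pos.1 (two_pos.trans_le (hfree φ))
    exact ⟨_, hp.bind_randomUpdate hv hdeg hfree hne⟩

end Distribution

theorem stmt1_general {V : Type*} [Fintype V] {G : SimpleGraph V} {L : V → Finset ℕ} {d k : ℕ}
    (hG : Degenerate G d) (hL : ∀ v, d + 2 ≤ #(L v)) (hk : ∀ v, #(L v) ≤ k) :
    WFlexible G L (2⁻¹ ^ d / k) := by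
  obtain ⟨p, hp⟩ := hG.exists_isFlexibleLawOn hL Finset.univ
  refine wFlexible_of_le_toOuterMeasure p (fun φ hφ => ?_) fun v c hc => ?_
  · obtain ⟨hmem, hproper⟩ := hp.isLColoringOn φ hφ
    exact ⟨fun v => hmem v (Finset.mem_univ v),
      fun u v => hproper u (Finset.mem_univ u) v (Finset.mem_univ v)⟩
  · have hk_pos : (0 : ℝ) < k := by
      exact_mod_cast (Nat.succ_pos _).trans_le ((hL v).trans (hk v))
    calc ENNReal.ofReal (2⁻¹ ^ d / k) = 2⁻¹ ^ d / k := by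
          rw [ENNReal.ofReal_div_of_pos hk_pos, ENNReal.ofReal_pow (by positivity),
            ENNReal.ofReal_inv_of_pos two_pos, ENNReal.ofReal_ofNat, ENNReal.ofReal_natCast]
      _ ≤ 2⁻¹ ^ d / #(L v) := by
          gcongr
          exact hk v
      _ ≤ p.toOuterMeasure {φ | φ v = c} := hp.hit v (Finset.mem_univ v) c hc

theorem stmt1 (d : ℕ) :
    ∃ ε : ℝ, 0 < ε ∧
      ∀ (V : Type) [Fintype V] (G : SimpleGraph V) (L : V → Finset ℕ),
        Degenerate G d → (∀ v, (L v).card = d + 2) → WFlexible G L ε := by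
  refine ⟨2⁻¹ ^ d / (d + 2 : ℕ), by positivity, fun V _ G L hG hL => ?_⟩
  exact stmt1_general hG (fun v => (hL v).ge) fun v => (hL v).le
end

section
/- For every positive integer k, there exists a finite graph G with at most 22·4^k vertices and a list assignment L in which every list has size three, such that G with L is 1/6-flexible but G with L is not weighted ε-flexible for any ε > 1/k. -/
def EpsSat {V : Type*} (G : SimpleGraph V) (L : V → Finset ℕ) (D : Finset V)
    (r : V → ℕ) (ε : ℝ) : Prop :=
  ∃ φ : V → ℕ, IsLColoring G L φ ∧ ε * D.card ≤ ((D.filter fun v => φ v = r v).card : ℝ)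

def Flexible {V : Type*} (G : SimpleGraph V) (L : V → Finset ℕ) (ε : ℝ) : Prop :=
  ∀ (D : Finset V) (r : V → ℕ), (∀ v ∈ D, r v ∈ L v) → EpsSat G L D r ε

/-! The vertices are arranged in gadgets along the infinite binary tree, and everything is
governed by the set `X` of nodes whose request for colour `0` is granted and the set `T` of nodes
whose switch is on: the lists allow precisely the pairs in which a granted node is on, a node
with a child that is on is itself on, and a granted node does not have both children on.

By these rules, twice the indicator of `T` at a node is at least the indicator of `X` there plus
those of `T` at the two children. Weighting each node by `2⁻ˡ` at level `l` and
telescoping, the granted weight is at most twice the weight of the root, whereas the total weight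
of the requests is the number of levels.

Without weights, switch on exactly the ancestors of a requested set `B`. A node of `B` is refused
only if both of its children are on, and a binary tree has fewer branchings than leaves, so at
least half of `B` is granted. All other requests are covered by three colourings. -/

open Finset

section Flexibility

variable {V W : Type*}

lemma IsLColoring.comap {G : SimpleGraph W} {L : W → Finset ℕ} {φ : W → ℕ}
    (hφ : IsLColoring G L φ) (f : V → W) : IsLColoring (G.comap f) (L ∘ f) (φ ∘ f) :=
  ⟨fun v => hφ.1 (f v), fun _ _ h => hφ.2 h⟩

lemma isLColoring_fromRel {r : V → V → Prop} {L : V → Finset ℕ} {φ : V → ℕ}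
    (hL : ∀ v, φ v ∈ L v) (hr : ∀ u w, r u w → φ u ≠ φ w) :
    IsLColoring (SimpleGraph.fromRel r) L φ := by
  refine ⟨hL, fun u w h => ?_⟩
  rcases ((SimpleGraph.fromRel_adj r u w).1 h).2 with huw | hwu
  · exact hr u w huw
  · exact (hr w u hwu).symm

lemma EpsSat.of_cover {G : SimpleGraph V} {L : V → Finset ℕ} {D : Finset V} {r : V → ℕ}
    {ι : Type*} [Fintype ι] [Nonempty ι] (φ : ι → V → ℕ) (hφ : ∀ i, IsLColoring G L (φ i))
    (hcover : ∀ v ∈ D, ∃ i, φ i v = r v) : EpsSat G L D r (1 / Fintype.card ι) := by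
  classical
  have card_le : #D ≤ ∑ i, #{v ∈ D | φ i v = r v} := by
    refine le_trans (card_le_card fun v hv => ?_) card_biUnion_le
    simpa [hv] using hcover v hv
  have card_pos : (0 : ℝ) < Fintype.card ι := by exact_mod_cast Fintype.card_pos
  have sum_le : ∑ _i : ι, 1 / (Fintype.card ι : ℝ) * #D ≤ ∑ i, (#{v ∈ D | φ i v = r v} : ℝ) := by
    rw [sum_const, card_univ, nsmul_eq_mul, ← mul_assoc, mul_one_div_cancel card_pos.ne', one_mul]
    exact_mod_cast card_le
  obtain ⟨i, -, hi⟩ := exists_le_of_sum_le univ_nonempty sum_le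
  exact ⟨φ i, hφ i, hi⟩

lemma EpsSat.union [DecidableEq V] {G : SimpleGraph V} {L : V → Finset ℕ} {D₁ D₂ : Finset V}
    {r : V → ℕ} {a b : ℝ} (ha : 0 < a) (hb : 0 < b) (h₁ : EpsSat G L D₁ r (1 / a))
    (h₂ : EpsSat G L D₂ r (1 / b)) : EpsSat G L (D₁ ∪ D₂) r (1 / (a + b)) := by
  have card_le : (#(D₁ ∪ D₂) : ℝ) ≤ #D₁ + #D₂ := by exact_mod_cast card_union_le D₁ D₂
  -- A set of size `n = n₁ + n₂` has `n₁ / a` or `n₂ / b` at least `n / (a + b)`.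
  have extend {D : Finset V} {c : ℝ} (hD : D ⊆ D₁ ∪ D₂) (hc : 0 < c)
      (h : EpsSat G L D r (1 / c)) (hcard : c * #(D₁ ∪ D₂) ≤ (a + b) * #D) :
      EpsSat G L (D₁ ∪ D₂) r (1 / (a + b)) := by
    obtain ⟨φ, hφ, hsat⟩ := h
    refine ⟨φ, hφ, ?_⟩
    calc 1 / (a + b) * (#(D₁ ∪ D₂) : ℝ) ≤ 1 / c * #D := by
          rw [one_div_mul_eq_div, one_div_mul_eq_div, div_le_div_iff₀ (by positivity) hc]
          linarith
      _ ≤ #{v ∈ D | φ v = r v} := hsat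
      _ ≤ #{v ∈ D₁ ∪ D₂ | φ v = r v} := by gcongr
  rcases le_total (a * #(D₁ ∪ D₂) : ℝ) ((a + b) * #D₁) with h | h
  · exact extend subset_union_left ha h₁ h
  · refine extend subset_union_right hb h₂ ?_
    have := mul_le_mul_of_nonneg_left card_le (add_pos ha hb).le
    linarith

lemma Flexible.mono {G : SimpleGraph V} {L : V → Finset ℕ} {ε δ : ℝ} (h : Flexible G L ε)
    (hδ : δ ≤ ε) : Flexible G L δ := by
  intro D r hr
  obtain ⟨φ, hφ, hsat⟩ := h D r hr
  exact ⟨φ, hφ, (mul_le_mul_of_nonneg_right hδ (Nat.cast_nonneg _)).trans hsat⟩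

lemma Flexible.comap {G : SimpleGraph W} {L : W → Finset ℕ} {ε : ℝ} (h : Flexible G L ε)
    (f : V ↪ W) : Flexible (G.comap f) (L ∘ f) ε := by
  intro D r hr
  obtain ⟨φ, hφ, hsat⟩ := h (D.map f) (Function.extend f r 0)
    (by simpa [f.injective.extend_apply] using hr)
  refine ⟨φ ∘ f, hφ.comap f, ?_⟩
  simpa [filter_map, Function.comp_def, f.injective.extend_apply] using hsat

lemma WFlexible.comap [Fintype V] [Fintype W] {G : SimpleGraph W} {L : W → Finset ℕ} {ε : ℝ}
    (h : WFlexible G L ε) (f : V → W) : WFlexible (G.comap f) (L ∘ f) ε := by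
  classical
  intro w hw
  have sum_fiber (F : V → W → ℝ) : ∑ y, ∑ x with f x = y, F x y = ∑ x, F x (f x) := by
    rw [← sum_fiberwise univ f]
    refine sum_congr rfl fun y _ => sum_congr rfl fun x hx => ?_
    rw [(mem_filter.1 hx).2]
  obtain ⟨φ, hφ, hsat⟩ := h (fun y c => ∑ x with f x = y, w x c)
    fun y c => sum_nonneg fun x _ => hw x c
  refine ⟨φ ∘ f, hφ.comap f, ?_⟩
  have total : WeightTotal L (fun y c => ∑ x with f x = y, w x c) = WeightTotal (L ∘ f) w := by
    simp only [WeightTotal, sum_comm (s := L _)]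
    exact sum_fiber fun x y => ∑ c ∈ L y, w x c
  rwa [total, sum_fiber fun x y => w x (φ y)] at hsat

end Flexibility

section BinaryTree

/-- The left (`false`) or right (`true`) child of a node of the infinite binary tree, whose nodes
are numbered in breadth-first order from the root `0`. -/
def child (n : ℕ) (b : Bool) : ℕ := 2 * n + 1 + b.toNat

lemma child_inj {m n : ℕ} {a b : Bool} : child m a = child n b ↔ m = n ∧ a = b := by
  cases a <;> cases b <;> simp [child] <;> omega

lemma child_ne_zero (n : ℕ) (b : Bool) : child n b ≠ 0 := by
  simp [child]

lemma lt_child (n : ℕ) (b : Bool) : n < child n b := by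
  unfold child
  omega

lemma sum_range_child {M : Type*} [AddCommMonoid M] (f : ℕ → M) (N : ℕ) :
    f 0 + ∑ n ∈ range N, ∑ b, f (child n b) = ∑ n ∈ range (2 * N + 1), f n := by
  induction N with
  | zero => simp
  | succ N ih =>
    rw [sum_range_succ, ← add_assoc, ih, Fintype.sum_bool, add_comm (f (child N true)), ← add_assoc,
      show 2 * (N + 1) + 1 = 2 * N + 1 + 1 + 1 by ring, sum_range_succ _ (2 * N + 1 + 1),
      sum_range_succ _ (2 * N + 1)]
    rfl

/-- The weight `2⁻ˡ` of a node at level `l`, so that every full level has weight `1`. -/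
noncomputable def levelWeight (n : ℕ) : ℝ := (1 / 2) ^ Nat.log 2 (n + 1)

lemma levelWeight_nonneg (n : ℕ) : 0 ≤ levelWeight n := by
  unfold levelWeight
  positivity

lemma levelWeight_zero : levelWeight 0 = 1 := by
  simp [levelWeight]

lemma levelWeight_child (n : ℕ) (b : Bool) : levelWeight (child n b) = levelWeight n / 2 := by
  have log_child : Nat.log 2 (child n b + 1) = Nat.log 2 (n + 1) + 1 := by
    have hdiv : (child n b + 1) / 2 = n + 1 := by cases b <;> simp [child] <;> omega
    rw [Nat.log_of_one_lt_of_le one_lt_two (by unfold child; omega), hdiv]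
  rw [levelWeight, log_child, pow_succ, levelWeight]
  ring

lemma sum_levelWeight (d : ℕ) : ∑ n ∈ range (2 ^ d - 1), levelWeight n = d := by
  induction d with
  | zero => simp
  | succ d ih =>
    have hpow : 2 ^ (d + 1) - 1 = 2 * (2 ^ d - 1) + 1 := by
      have := Nat.one_le_two_pow (n := d)
      omega
    rw [hpow, ← sum_range_child, levelWeight_zero, Nat.cast_succ, ← ih, add_comm]
    simp only [levelWeight_child, Fintype.sum_bool, add_halves]

end BinaryTree

section SwitchPattern

/-- `IsSwitchPattern X T` says that a set `X` of granted nodes and a set `T` of nodes that are on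
obey the rules which the gadgets below impose on colourings. -/
structure IsSwitchPattern (X T : Set ℕ) : Prop where
  mem_on {n : ℕ} : n ∈ X → n ∈ T
  mem_of_child {n : ℕ} {b : Bool} : child n b ∈ T → n ∈ T
  not_both {n : ℕ} : n ∈ X → ¬ (child n false ∈ T ∧ child n true ∈ T)

variable {X T : Set ℕ}

lemma isSwitchPattern_empty : IsSwitchPattern ∅ ∅ := by
  constructor <;> simp

lemma IsSwitchPattern.indicator_levelWeight_le (h : IsSwitchPattern X T) (n : ℕ) :
    X.indicator levelWeight n + 2 * ∑ b, T.indicator levelWeight (child n b) ≤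
      2 * T.indicator levelWeight n := by
  classical
  have hpos := levelWeight_nonneg n
  have hon := h.mem_on (n := n)
  have hl := h.mem_of_child (n := n) (b := false)
  have hr := h.mem_of_child (n := n) (b := true)
  have hboth := h.not_both (n := n)
  simp only [Fintype.sum_bool, Set.indicator_apply, levelWeight_child]
  split_ifs <;> first | linarith | tauto

lemma IsSwitchPattern.sum_levelWeight_le_two (h : IsSwitchPattern X T) (N : ℕ) :
    ∑ n ∈ range N, X.indicator levelWeight n ≤ 2 := by
  have local_le := sum_le_sum fun n (_ : n ∈ range N) => h.indicator_levelWeight_le n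
  rw [sum_add_distrib, ← mul_sum, ← mul_sum] at local_le
  have telescope := sum_range_child (T.indicator levelWeight) N
  have nonneg (n : ℕ) : 0 ≤ T.indicator levelWeight n :=
    Set.indicator_nonneg (fun n _ => levelWeight_nonneg n) n
  have extend : ∑ n ∈ range N, T.indicator levelWeight n ≤
      ∑ n ∈ range (2 * N + 1), T.indicator levelWeight n :=
    sum_le_sum_of_subset_of_nonneg (range_mono (by omega)) fun n _ _ => nonneg n
  have root : T.indicator levelWeight 0 ≤ 1 :=
    levelWeight_zero ▸ Set.indicator_le_self' (fun n _ => levelWeight_nonneg n) 0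
  linarith

/-- The nodes that lie in `B` or have a proper descendant in `B`. -/
inductive HasDescendantIn (B : Set ℕ) : ℕ → Prop
  | self {n : ℕ} : n ∈ B → HasDescendantIn B n
  | of_child {n : ℕ} (b : Bool) : HasDescendantIn B (child n b) → HasDescendantIn B n

lemma HasDescendantIn.exists_le {B : Set ℕ} {n : ℕ} (h : HasDescendantIn B n) :
    ∃ m ∈ B, n ≤ m := by
  induction h with
  | self h => exact ⟨_, h, le_rfl⟩
  | of_child b _ ih =>
    obtain ⟨m, hm, hle⟩ := ih
    exact ⟨m, hm, (lt_child _ b).le.trans hle⟩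

/-- The nodes of `B` that can be granted when exactly the ancestors of `B` are on. -/
def grantable (B : Set ℕ) : Set ℕ :=
  {n ∈ B | ¬ (HasDescendantIn B (child n false) ∧ HasDescendantIn B (child n true))}

lemma isSwitchPattern_grantable (B : Set ℕ) :
    IsSwitchPattern (grantable B) {n | HasDescendantIn B n} where
  mem_on h := .self h.1
  mem_of_child h := .of_child _ h
  not_both h := h.2

lemma indicator_add_indicator_hasDescendantIn_le (B : Set ℕ) (n : ℕ) :
    B.indicator 1 n + {m | HasDescendantIn B m}.indicator 1 n ≤
      2 * (grantable B).indicator (1 : ℕ → ℕ) n +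
        ∑ b, {m | HasDescendantIn B m}.indicator 1 (child n b) := by
  classical
  have hself : n ∈ B → HasDescendantIn B n := .self
  have hdesc : HasDescendantIn B n → n ∈ B ∨ ∃ b, HasDescendantIn B (child n b) := by
    rintro (h | ⟨b, h⟩)
    exacts [.inl h, .inr ⟨b, h⟩]
  rw [Bool.exists_bool] at hdesc
  simp only [Fintype.sum_bool, Set.indicator_apply, grantable, Set.mem_ofPred_eq, Pi.one_apply]
  split_ifs <;> first | omega | tauto

lemma sum_indicator_one {s t : Finset ℕ} (h : s ⊆ t) :
    ∑ n ∈ t, (s : Set ℕ).indicator (1 : ℕ → ℕ) n = #s :=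
  (sum_indicator_subset 1 h).trans (card_eq_sum_ones s).symm

lemma card_le_two_mul_ncard_grantable (B : Finset ℕ) :
    #B ≤ 2 * (grantable (B : Set ℕ)).ncard := by
  obtain ⟨N, hN⟩ := B.exists_nat_subset_range
  set T : Set ℕ := {n | HasDescendantIn (B : Set ℕ) n} with hT
  have local_le := sum_le_sum fun n (_ : n ∈ range N) =>
    indicator_add_indicator_hasDescendantIn_le (B : Set ℕ) n
  rw [sum_add_distrib, sum_add_distrib, ← mul_sum, ← hT] at local_le
  have telescope := sum_range_child (T.indicator (1 : ℕ → ℕ)) N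
  have no_tail : ∑ n ∈ range N, T.indicator (1 : ℕ → ℕ) n =
      ∑ n ∈ range (2 * N + 1), T.indicator 1 n := by
    refine sum_subset (range_mono (by omega)) fun n _ hn => Set.indicator_of_notMem (fun h => ?_) _
    obtain ⟨m, hm, hle⟩ := h.exists_le
    exact hn (mem_range.2 (hle.trans_lt (mem_range.1 (hN hm))))
  have card_requested : ∑ n ∈ range N, (B : Set ℕ).indicator (1 : ℕ → ℕ) n = #B :=
    sum_indicator_one hN
  have card_granted : ∑ n ∈ range N, (grantable (B : Set ℕ)).indicator (1 : ℕ → ℕ) n =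
      (grantable (B : Set ℕ)).ncard := by
    lift grantable (B : Set ℕ) to Finset ℕ using B.finite_toSet.subset fun n h => h.1 with X hX
    have hXN : X ⊆ range N := fun n hn => hN (by exact_mod_cast (hX ▸ mem_coe.2 hn).1)
    rw [Set.ncard_coe_finset, sum_indicator_one hXN]
  omega

end SwitchPattern

section TreeGraph

/-- The eight vertices of the gadget at a node. The requests for colour `0` are made at
`request`; a node is on if its `switch` does not have colour `0`; the `lock`s switch a node on as
soon as a child is on, and the `blocker`s keep a granted node from having both children on. -/
inductive Role
  | request
  | switch
  | lock (b : Bool)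
  | blocker (a b : Bool)
  deriving Fintype

open Role

/-- The edges of the graph, each in one direction: inside a gadget, and between the gadgets of a
node and of its children. -/
inductive TreeEdge : ℕ × Role → ℕ × Role → Prop
  | request_switch (n : ℕ) : TreeEdge (n, request) (n, switch)
  | switch_lock (n : ℕ) (b : Bool) : TreeEdge (n, switch) (n, lock b)
  | lock_lock (n : ℕ) : TreeEdge (n, lock false) (n, lock true)
  | request_blocker (n : ℕ) (a b : Bool) : TreeEdge (n, request) (n, blocker a b)
  | lock_parent (n : ℕ) (c b : Bool) : TreeEdge (child n c, lock b) (n, switch)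
  | blocker_child (n : ℕ) (c a b : Bool) : TreeEdge (n, blocker a b) (child n c, switch)

lemma TreeEdge.ne {p q : ℕ × Role} (h : TreeEdge p q) : p ≠ q := by
  cases h <;> simp

/-- The graph on the gadgets of all nodes of the infinite binary tree. -/
def treeGraph : SimpleGraph (ℕ × Role) := SimpleGraph.fromRel TreeEdge

/-- The two colours private to a node. The numbers of its children serve as colours, being
distinct for distinct nodes and different from `0`. -/
abbrev privateColor (n : ℕ) (b : Bool) : ℕ := child n b

/-- A node whose private colours are foreign to the gadget at `n`: neither `n` nor a child of
`n`. -/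
def spareNode (n : ℕ) : ℕ := child n true + 1

lemma spareNode_ne_self (n : ℕ) : spareNode n ≠ n :=
  ((lt_child n true).trans (Nat.lt_succ_self _)).ne'

lemma spareNode_ne_child (n : ℕ) (b : Bool) : spareNode n ≠ child n b := by
  cases b <;> simp only [spareNode, child, Bool.toNat_false, Bool.toNat_true] <;> omega

/-- Colour `0` together with the private colours of a node. -/
def palette (n : ℕ) : Finset ℕ := {0, privateColor n false, privateColor n true}

lemma mem_palette {n c : ℕ} : c ∈ palette n ↔ c = 0 ∨ ∃ b, c = privateColor n b := by
  rw [palette, mem_insert, mem_insert, mem_singleton, Bool.exists_bool]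

/-- The list assignment of `treeGraph`. A blocker has one private colour of each child, and each
of the four choices occurs. -/
def treeLists : ℕ × Role → Finset ℕ
  | (n, request) => palette (spareNode n)
  | (n, switch) => palette n
  | (n, lock _) => palette n
  | (n, blocker a b) => {0, privateColor (child n false) a, privateColor (child n true) b}

lemma zero_mem_treeLists (p : ℕ × Role) : 0 ∈ treeLists p := by
  obtain ⟨n, _ | _ | _ | _⟩ := p <;> exact mem_insert_self _ _

lemma card_treeLists (p : ℕ × Role) : #(treeLists p) = 3 := by
  obtain ⟨n, _ | _ | _ | _⟩ := p <;> refine card_eq_three.2 ⟨_, _, _, ?_, ?_, ?_, rfl⟩ <;>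
    simp [child_inj, (child_ne_zero _ _).symm]

open Classical in
/-- The colouring that realises a switch pattern; a node that is on uses its private colour
`false`. -/
noncomputable def patternColoring (X T : Set ℕ) : ℕ × Role → ℕ
  | (n, request) => if n ∈ X then 0 else privateColor (spareNode n) false
  | (n, switch) => if n ∈ T then privateColor n false else 0
  | (n, lock b) => if n ∈ T ∧ b = false then 0 else privateColor n b
  | (n, blocker a b) =>
    if a = true ∨ child n false ∉ T then privateColor (child n false) a
    else if b = true ∨ child n true ∉ T then privateColor (child n true) b
    else 0

/-- A colouring in which every node is on, with private colour `b`. -/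
def onColoring (b : Bool) : ℕ × Role → ℕ
  | (n, request) => privateColor (spareNode n) true
  | (n, switch) => privateColor n b
  | (n, lock c) => if c = b then privateColor n (!b) else 0
  | (n, blocker _ c) => if c = b then 0 else privateColor (child n true) c

lemma IsSwitchPattern.isLColoring {X T : Set ℕ} (h : IsSwitchPattern X T) :
    IsLColoring treeGraph treeLists (patternColoring X T) := by
  refine isLColoring_fromRel ?_ ?_
  · rintro ⟨n, _ | _ | b | ⟨a, b⟩⟩ <;> simp only [patternColoring, treeLists] <;> split_ifs <;>
      simp [mem_palette, child_inj]
  · rintro _ _ (n | ⟨n, b⟩ | n | ⟨n, a, b⟩ | ⟨n, c, b⟩ | ⟨n, c, a, b⟩)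
    · have := h.mem_on (n := n)
      grind [patternColoring, child_inj, child_ne_zero, spareNode_ne_self]
    · grind [patternColoring, child_inj, child_ne_zero]
    · grind [patternColoring, child_inj, child_ne_zero]
    · have := h.not_both (n := n)
      grind [patternColoring, child_inj, child_ne_zero, spareNode_ne_child]
    · have := h.mem_of_child (n := n) (b := c)
      grind [patternColoring, child_inj, lt_child]
    · cases c <;> grind [patternColoring, child_inj, child_ne_zero]

lemma isLColoring_onColoring (b : Bool) : IsLColoring treeGraph treeLists (onColoring b) := by
  refine isLColoring_fromRel ?_ ?_
  · rintro ⟨n, _ | _ | c | ⟨a, c⟩⟩ <;> simp only [onColoring, treeLists] <;> (try split_ifs) <;>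
      simp [mem_palette, child_inj]
  · rintro _ _ (n | ⟨n, b⟩ | n | ⟨n, a, b⟩ | ⟨n, c, b⟩ | ⟨n, c, a, b⟩)
    · grind [onColoring, child_inj, spareNode_ne_self]
    · grind [onColoring, child_inj, child_ne_zero]
    · grind [onColoring, child_ne_zero]
    · grind [onColoring, child_inj, child_ne_zero, spareNode_ne_child]
    · grind [onColoring, child_inj, lt_child]
    · grind [onColoring, child_inj, child_ne_zero]

/-- The three colourings that together satisfy all requests other than colour `0` at a `request`. -/
noncomputable def baseColoring : Option Bool → ℕ × Role → ℕ
  | none => patternColoring ∅ ∅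
  | some b => onColoring b

lemma isLColoring_baseColoring (i : Option Bool) :
    IsLColoring treeGraph treeLists (baseColoring i) := by
  cases i with
  | none => exact isSwitchPattern_empty.isLColoring
  | some b => exact isLColoring_onColoring b

lemma exists_baseColoring_eq {p : ℕ × Role} {c : ℕ} (hc : c ∈ treeLists p)
    (hp : ¬ (p.2 = request ∧ c = 0)) : ∃ i, baseColoring i p = c := by
  obtain ⟨n, _ | _ | b | ⟨a, b⟩⟩ := p
  · obtain rfl | ⟨_ | _, rfl⟩ := mem_palette.1 hc
    · exact absurd ⟨rfl, rfl⟩ hp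
    · exact ⟨none, by simp [baseColoring, patternColoring]⟩
    · exact ⟨some true, rfl⟩
  · obtain rfl | ⟨b, rfl⟩ := mem_palette.1 hc
    · exact ⟨none, by simp [baseColoring, patternColoring]⟩
    · exact ⟨some b, rfl⟩
  · obtain rfl | ⟨c, rfl⟩ := mem_palette.1 hc
    · exact ⟨some !b, by simp [baseColoring, onColoring]⟩
    · rcases Bool.eq_or_eq_not c b with rfl | rfl
      · exact ⟨none, by simp [baseColoring, patternColoring]⟩
      · exact ⟨some b, by simp [baseColoring, onColoring]⟩
  · simp only [treeLists, mem_insert, mem_singleton] at hc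
    obtain rfl | rfl | rfl := hc
    · exact ⟨some b, by simp [baseColoring, onColoring]⟩
    · exact ⟨none, by simp [baseColoring, patternColoring]⟩
    · exact ⟨some !b, by simp [baseColoring, onColoring]⟩

lemma epsSat_zero_requests {D : Finset (ℕ × Role)} {r : ℕ × Role → ℕ}
    (hD : ∀ p ∈ D, p.2 = request ∧ r p = 0) : EpsSat treeGraph treeLists D r (1 / 2) := by
  set B : Finset ℕ := D.image Prod.fst
  have card_B : #B = #D := card_image_of_injOn fun p hp q hq h =>
    Prod.ext h ((hD p hp).1.trans (hD q hq).1.symm)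
  set φ := patternColoring (grantable B) {n | HasDescendantIn B n}
  refine ⟨φ, (isSwitchPattern_grantable B).isLColoring, ?_⟩
  have granted : grantable B ⊆ {p ∈ D | φ p = r p}.image Prod.fst := by
    intro n hn
    obtain ⟨⟨m, ρ⟩, hp, rfl⟩ := mem_image.1 (mem_coe.1 hn.1)
    obtain ⟨rfl, hr⟩ := hD _ hp
    refine mem_coe.2 (mem_image.2 ⟨_, mem_filter.2 ⟨hp, ?_⟩, rfl⟩)
    rw [hr]
    exact if_pos hn
  have card_granted : (grantable B).ncard ≤ #{p ∈ D | φ p = r p} := by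
    refine (Set.ncard_le_ncard granted (finite_toSet _)).trans ?_
    rw [Set.ncard_coe_finset]
    exact card_image_le
  have card_le : #D ≤ 2 * #{p ∈ D | φ p = r p} := by
    have := card_le_two_mul_ncard_grantable B
    omega
  have card_le' : (#D : ℝ) ≤ 2 * #{p ∈ D | φ p = r p} := by exact_mod_cast card_le
  linarith

theorem flexible_treeGraph : Flexible treeGraph treeLists (1 / 5) := by
  classical
  intro D r hr
  have zero : EpsSat treeGraph treeLists {p ∈ D | p.2 = request ∧ r p = 0} r (1 / 2) :=
    epsSat_zero_requests fun p hp => (mem_filter.1 hp).2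
  have other : EpsSat treeGraph treeLists {p ∈ D | ¬ (p.2 = request ∧ r p = 0)} r (1 / 3) := by
    have := EpsSat.of_cover (D := {p ∈ D | ¬ (p.2 = request ∧ r p = 0)}) (r := r) baseColoring
      isLColoring_baseColoring fun p hp =>
        exists_baseColoring_eq (hr p (mem_filter.1 hp).1) (mem_filter.1 hp).2
    simpa using this
  have := zero.union two_pos three_pos other
  rw [filter_union_filter_not_eq] at this
  norm_num at this ⊢
  exact this

end TreeGraph

section Truncation

open Role

/-- The inclusion of the gadgets of the first `N` nodes. -/
def truncation (N : ℕ) : Fin N × Role ↪ ℕ × Role :=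
  Fin.valEmbedding.prodMap (Function.Embedding.refl Role)

lemma truncation_apply {N : ℕ} (n : Fin N) (ρ : Role) : truncation N (n, ρ) = (↑n, ρ) := rfl

variable {N : ℕ} {φ : Fin N × Role → ℕ}

lemma IsLColoring.ne_of_treeEdge
    (hφ : IsLColoring (treeGraph.comap (truncation N)) (treeLists ∘ truncation N) φ)
    {p q : Fin N × Role} (h : TreeEdge (truncation N p) (truncation N q)) : φ p ≠ φ q :=
  hφ.2 ((SimpleGraph.fromRel_adj _ _ _).2 ⟨h.ne, .inl h⟩)

lemma IsLColoring.switch_ne_zero_of_request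
    (hφ : IsLColoring (treeGraph.comap (truncation N)) (treeLists ∘ truncation N) φ)
    {n : Fin N} (h : φ (n, request) = 0) : φ (n, switch) ≠ 0 :=
  h ▸ (hφ.ne_of_treeEdge (.request_switch n)).symm

lemma IsLColoring.switch_ne_zero_of_child
    (hφ : IsLColoring (treeGraph.comap (truncation N)) (treeLists ∘ truncation N) φ)
    {n c : Fin N} {b : Bool} (hc : (c : ℕ) = child n b) (h : φ (c, switch) ≠ 0) :
    φ (n, switch) ≠ 0 := by
  intro hn
  have lock_ne_zero (a : Bool) : φ (c, lock a) ≠ 0 :=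
    hn ▸ hφ.ne_of_treeEdge (q := (n, switch)) (by
      simpa [truncation, hc] using TreeEdge.lock_parent n b a)
  have lock_ne_switch (a : Bool) : φ (c, switch) ≠ φ (c, lock a) :=
    hφ.ne_of_treeEdge (.switch_lock c a)
  have lock_ne_lock : φ (c, lock false) ≠ φ (c, lock true) := hφ.ne_of_treeEdge (.lock_lock c)
  obtain ⟨x, hx⟩ : ∃ x, φ (c, switch) = privateColor c x :=
    (mem_palette.1 (hφ.1 (c, switch))).resolve_left h
  have lock_eq (a : Bool) : φ (c, lock a) = privateColor c !x := by
    obtain ⟨y, hy⟩ : ∃ y, φ (c, lock a) = privateColor c y :=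
      (mem_palette.1 (hφ.1 (c, lock a))).resolve_left (lock_ne_zero a)
    have hyx : y ≠ x := fun hyx => lock_ne_switch a (hx.trans (hyx ▸ hy.symm))
    rw [hy, Bool.eq_not_of_ne hyx]
  exact lock_ne_lock ((lock_eq false).trans (lock_eq true).symm)

lemma IsLColoring.not_both_children
    (hφ : IsLColoring (treeGraph.comap (truncation N)) (treeLists ∘ truncation N) φ)
    {n c d : Fin N} (hc : (c : ℕ) = child n false) (hd : (d : ℕ) = child n true)
    (h : φ (n, request) = 0) : ¬ (φ (c, switch) ≠ 0 ∧ φ (d, switch) ≠ 0) := by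
  rintro ⟨hc0, hd0⟩
  obtain ⟨a, ha⟩ : ∃ a, φ (c, switch) = privateColor c a :=
    (mem_palette.1 (hφ.1 (c, switch))).resolve_left hc0
  obtain ⟨b, hb⟩ : ∃ b, φ (d, switch) = privateColor d b :=
    (mem_palette.1 (hφ.1 (d, switch))).resolve_left hd0
  have mem_blocker := hφ.1 (n, blocker a b)
  simp only [Function.comp_apply, truncation_apply, treeLists, mem_insert, mem_singleton, ← hc,
    ← hd, ← ha, ← hb] at mem_blocker
  rcases mem_blocker with h0 | h0 | h0
  · exact hφ.ne_of_treeEdge (.request_blocker n a b) (h.trans h0.symm)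
  · exact hφ.ne_of_treeEdge (q := (c, switch))
      (by simpa [truncation, hc] using TreeEdge.blocker_child n false a b) h0
  · exact hφ.ne_of_treeEdge (q := (d, switch))
      (by simpa [truncation, hd] using TreeEdge.blocker_child n true a b) h0

lemma IsLColoring.isSwitchPattern
    (hφ : IsLColoring (treeGraph.comap (truncation N)) (treeLists ∘ truncation N) φ) :
    IsSwitchPattern (Fin.val '' {n | φ (n, request) = 0}) (Fin.val '' {n | φ (n, switch) ≠ 0}) where
  mem_on := by
    rintro _ ⟨n, hn, rfl⟩
    exact ⟨n, hφ.switch_ne_zero_of_request hn, rfl⟩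
  mem_of_child := by
    rintro n b ⟨c, hc, hcn⟩
    exact ⟨⟨n, (lt_child n b).trans (hcn ▸ c.2)⟩, hφ.switch_ne_zero_of_child hcn hc, rfl⟩
  not_both := by
    rintro _ ⟨n, hn, rfl⟩ ⟨⟨c, hc, hcn⟩, ⟨d, hd, hdn⟩⟩
    exact hφ.not_both_children hcn hdn hn ⟨hc, hd⟩

/-- The weighted request that asks for colour `0` at every `request`, with the weight of its
node. -/
noncomputable def requestWeight : Fin N × Role → ℕ → ℝ
  | (n, request), 0 => levelWeight n
  | _, _ => 0

lemma requestWeight_nonneg (p : Fin N × Role) (c : ℕ) : 0 ≤ requestWeight p c := by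
  unfold requestWeight
  split
  · exact levelWeight_nonneg _
  · exact le_rfl

lemma weightTotal_requestWeight (d : ℕ) :
    WeightTotal (treeLists ∘ truncation (2 ^ d - 1)) requestWeight = d := by
  have sum_gadget (n : Fin (2 ^ d - 1)) :
      ∑ ρ, ∑ c ∈ treeLists (n, ρ), requestWeight (n, ρ) c = levelWeight n := by
    rw [Fintype.sum_eq_single request]
    · rw [sum_eq_single_of_mem 0 (zero_mem_treeLists _)]
      · rfl
      · rintro (_ | c) _ hc
        · exact absurd rfl hc
        · rfl
    · rintro (_ | _ | _ | _) hρ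
      · exact absurd rfl hρ
      all_goals exact sum_eq_zero fun _ _ => rfl
  calc WeightTotal (treeLists ∘ truncation (2 ^ d - 1)) requestWeight
      = ∑ n : Fin (2 ^ d - 1), levelWeight n := by
        rw [WeightTotal, Fintype.sum_prod_type]
        exact sum_congr rfl fun n _ => sum_gadget n
    _ = d := by rw [Fin.sum_univ_eq_sum_range, sum_levelWeight]

lemma IsLColoring.sum_requestWeight_le_two
    (hφ : IsLColoring (treeGraph.comap (truncation N)) (treeLists ∘ truncation N) φ) :
    ∑ p, requestWeight p (φ p) ≤ 2 := by
  classical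
  set X : Set ℕ := Fin.val '' {n | φ (n, request) = 0} with hX
  have sum_gadget (n : Fin N) :
      ∑ ρ, requestWeight (n, ρ) (φ (n, ρ)) = X.indicator levelWeight n := by
    have mem_X : (n : ℕ) ∈ X ↔ φ (n, request) = 0 := by
      rw [hX, Fin.val_injective.mem_set_image, Set.mem_ofPred_eq]
    rw [Fintype.sum_eq_single request]
    · rw [Set.indicator_apply, mem_X]
      split_ifs with h
      · rw [h]
        rfl
      · obtain ⟨c, hc⟩ := Nat.exists_eq_succ_of_ne_zero h
        rw [hc]
        rfl
    · rintro (_ | _ | _ | _) hρ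
      · exact absurd rfl hρ
      all_goals rfl
  calc ∑ p, requestWeight p (φ p) = ∑ n : Fin N, X.indicator levelWeight n := by
        rw [Fintype.sum_prod_type]
        exact sum_congr rfl fun n _ => sum_gadget n
    _ = ∑ n ∈ range N, X.indicator levelWeight n := Fin.sum_univ_eq_sum_range _ N
    _ ≤ 2 := hφ.isSwitchPattern.sum_levelWeight_le_two N

theorem not_wFlexible_truncation {d : ℕ} (hd : 0 < d) {ε : ℝ} (hε : 2 / d < ε) :
    ¬ WFlexible (treeGraph.comap (truncation (2 ^ d - 1)))
      (treeLists ∘ truncation (2 ^ d - 1)) ε := by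
  intro h
  obtain ⟨φ, hφ, hsat⟩ := h requestWeight requestWeight_nonneg
  rw [weightTotal_requestWeight] at hsat
  have : 2 < ε * d := (div_lt_iff₀ (by exact_mod_cast hd)).1 hε
  linarith [hφ.sum_requestWeight_le_two]

end Truncation

theorem stmt8_general (d : ℕ) (hd : 0 < d) :
    ∃ (m : ℕ) (G : SimpleGraph (Fin m)) (L : Fin m → Finset ℕ),
      m = 8 * (2 ^ d - 1) ∧ (∀ v, #(L v) = 3) ∧ Flexible G L (1 / 5) ∧
      ∀ ε : ℝ, 2 / d < ε → ¬ WFlexible G L ε := by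
  let e := (Fintype.equivFin (Fin (2 ^ d - 1) × Role)).symm
  refine ⟨_, (treeGraph.comap (truncation (2 ^ d - 1))).comap e, (treeLists ∘ truncation _) ∘ e,
    ?_, fun v => card_treeLists _, (flexible_treeGraph.comap _).comap e.toEmbedding,
    fun ε hε h => not_wFlexible_truncation hd hε ?_⟩
  · have card_role : Fintype.card Role = 8 := rfl
    rw [Fintype.card_prod, Fintype.card_fin, card_role, mul_comm]
  · simpa [SimpleGraph.comap_comap, Function.comp_assoc] using h.comap e.symm

theorem stmt8 (k : ℕ) (hk : 0 < k) :
    ∃ (m : ℕ) (G : SimpleGraph (Fin m)) (L : Fin m → Finset ℕ),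
      m ≤ 22 * 4 ^ k ∧ (∀ v, (L v).card = 3) ∧
      Flexible G L (1 / 6) ∧
      ∀ ε : ℝ, 1 / k < ε → ¬ WFlexible G L ε := by
  obtain ⟨m, G, L, hm, hL, hflex, hweight⟩ := stmt8_general (2 * k) (by omega)
  refine ⟨m, G, L, ?_, hL, hflex.mono (by norm_num), fun ε hε => hweight ε ?_⟩
  · rw [hm, pow_mul, show 2 ^ 2 = 4 from rfl]
    omega
  · rwa [Nat.cast_mul, Nat.cast_ofNat, ← div_div, div_self two_ne_zero]
end
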